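/- arXiv:1810.11345 — 4 statements merged into one kernel-verified Lean document; each statement's English description precedes it below -/
import Mathlib

section
/- For every dimension s ≥ 1 and every N ≥ 1 there exists a finite sequence z_1, …, z_N of points in the s-dimensional unit cube [0,1]^s whose star-discrepancy satisfies D*_N(z_1,…,z_N) < 9·√s/√N. -/
open Finset

open MeasureTheory ProbabilityTheory

/-!
Write `T = √(N / s)`; for `T < 9` the bound is trivial. For independent uniform points, the number
of points in a set of measure `v` deviates from its mean `N v` with Chernoff-type tails governed by
`N v`. Therefore small sets may be controlled much more precisely than large ones, and a chaining
argument pays: bracket every anchored box at level `k` up to measure `100⁻ᵏ` and control the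
differences of consecutive lower brackets up to `(6 N / T) 5⁻ᵏ`. With exponential parameter
`3 · 20ᵏ / T` each of these events fails with probability at most `2 exp (-9 s 4ᵏ)`, which beats the
number of brackets. The deviations add up to `7.5 N / T`, and the last bracketing error is at most
`1.4 N / T`.

The brackets have corners on the geometric grid `(q ^ n i)ᵢ` with `q ^ s = 1 - 100⁻ᵏ`. Their volume
depends only on `∑ i, n i`, and the relevant exponents are the lattice points of a simplex. Compared
with a cube this saves a factor `s!`, so that there are only `(C k 100ᵏ) ^ s` of them.
-/

section Concentration

variable {Ω ι : Type*} {mΩ : MeasurableSpace Ω} {P : Measure Ω}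

lemma mgf_le_exp_of_mem_Icc [IsProbabilityMeasure P] {X : Ω → ℝ} (hX : AEMeasurable X P)
    (h01 : ∀ᵐ ω ∂P, X ω ∈ Set.Icc 0 1) {t : ℝ} (ht : |t| ≤ 1) :
    mgf X P t ≤ Real.exp (P[X] * (t + t ^ 2)) := by
  have hint : Integrable X P := .of_mem_Icc 0 1 hX h01
  have exp_le : ∀ᵐ ω ∂P, Real.exp (t * X ω) ≤ 1 + X ω * (t + t ^ 2) := by
    filter_upwards [h01] with ω ⟨h0, h1⟩
    have habs : |t * X ω| ≤ 1 := by
      rw [abs_mul, abs_of_nonneg h0]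
      exact mul_le_one₀ ht h0 h1
    have htaylor := (abs_le.1 (Real.abs_exp_sub_one_sub_id_le habs)).2
    have hsq : X ω ^ 2 ≤ X ω := pow_le_of_le_one h0 h1 two_ne_zero
    nlinarith [mul_le_mul_of_nonneg_left hsq (sq_nonneg t)]
  calc mgf X P t ≤ ∫ ω, (1 + X ω * (t + t ^ 2)) ∂P :=
        integral_mono_ae (integrable_exp_mul_of_mem_Icc hX h01)
          ((integrable_const 1).add (hint.mul_const _)) exp_le
    _ = P[X] * (t + t ^ 2) + 1 := by
        rw [integral_add (integrable_const 1) (hint.mul_const _), integral_mul_const, add_comm]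
        simp
    _ ≤ Real.exp (P[X] * (t + t ^ 2)) := Real.add_one_le_exp _

variable [Fintype ι] {X : ι → Ω → ℝ}

lemma mgf_sum_le_exp_of_mem_Icc (hindep : iIndepFun X P) (hX : ∀ i, AEMeasurable (X i) P)
    (h01 : ∀ i, ∀ᵐ ω ∂P, X i ω ∈ Set.Icc 0 1) {t : ℝ} (ht : |t| ≤ 1) :
    mgf (∑ i, X i) P t ≤ Real.exp ((∑ i, P[X i]) * (t + t ^ 2)) := by
  have := hindep.isProbabilityMeasure
  rw [hindep.mgf_sum₀ hX, sum_mul, Real.exp_sum]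
  exact prod_le_prod (fun _ _ ↦ mgf_nonneg) fun i _ ↦ mgf_le_exp_of_mem_Icc (hX i) (h01 i) ht

lemma measureReal_le_mul_sum_sub_le (hindep : iIndepFun X P) (hX : ∀ i, AEMeasurable (X i) P)
    (h01 : ∀ i, ∀ᵐ ω ∂P, X i ω ∈ Set.Icc 0 1) {t : ℝ} (ht : |t| ≤ 1) (r : ℝ) :
    P.real {ω | r ≤ t * (∑ i, X i ω - ∑ i, P[X i])} ≤
      Real.exp ((∑ i, P[X i]) * t ^ 2 - r) := by
  have := hindep.isProbabilityMeasure
  have hint : Integrable (fun ω ↦ Real.exp (t * (∑ i, X i) ω)) P := by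
    refine integrable_exp_mul_of_mem_Icc (a := 0) (b := Fintype.card ι)
      (aemeasurable_sum _ fun i _ ↦ hX i) ?_
    filter_upwards [ae_all_iff.2 h01] with ω hω
    rw [Finset.sum_apply]
    exact ⟨sum_nonneg fun i _ ↦ (hω i).1, by simpa using sum_le_sum fun i (_ : i ∈ univ) ↦ (hω i).2⟩
  set m := ∑ i, P[X i]
  calc P.real {ω | r ≤ t * (∑ i, X i ω - m)}
      = P.real {ω | r + t * m ≤ t * (∑ i, X i) ω} := by
        simp only [Finset.sum_apply, mul_sub, le_sub_iff_add_le]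
    _ ≤ Real.exp (-1 * (r + t * m)) * mgf (fun ω ↦ t * (∑ i, X i) ω) P 1 :=
        measure_ge_le_exp_mul_mgf _ zero_le_one (by simpa only [one_mul] using hint)
    _ ≤ Real.exp (-1 * (r + t * m)) * Real.exp (m * (t + t ^ 2)) := by
        rw [mgf_const_mul, mul_one]
        gcongr
        exact mgf_sum_le_exp_of_mem_Icc hindep hX h01 ht
    _ = Real.exp (m * t ^ 2 - r) := by rw [← Real.exp_add]; ring_nf

lemma measureReal_le_abs_sum_sub_le (hindep : iIndepFun X P) (hX : ∀ i, AEMeasurable (X i) P)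
    (h01 : ∀ i, ∀ᵐ ω ∂P, X i ω ∈ Set.Icc 0 1) {t : ℝ} (ht : t ∈ Set.Icc 0 1) (ε : ℝ) :
    P.real {ω | ε ≤ |∑ i, X i ω - ∑ i, P[X i]|} ≤
      2 * Real.exp ((∑ i, P[X i]) * t ^ 2 - t * ε) := by
  have := hindep.isProbabilityMeasure
  have habs : |t| ≤ 1 := (abs_of_nonneg ht.1).trans_le ht.2
  have upper := measureReal_le_mul_sum_sub_le hindep hX h01 habs (t * ε)
  have lower := measureReal_le_mul_sum_sub_le hindep hX h01 (t := -t) (by rwa [abs_neg]) (t * ε)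
  rw [neg_sq] at lower
  have hsub : {ω | ε ≤ |∑ i, X i ω - ∑ i, P[X i]|} ⊆
      {ω | t * ε ≤ t * (∑ i, X i ω - ∑ i, P[X i])} ∪
        {ω | t * ε ≤ -t * (∑ i, X i ω - ∑ i, P[X i])} := by
    intro ω (hω : ε ≤ |_|)
    rcases le_abs.1 hω with h | h
    · exact .inl (mul_le_mul_of_nonneg_left h ht.1)
    · exact .inr (by
        simpa only [Set.mem_ofPred_eq, neg_mul, mul_neg] using mul_le_mul_of_nonneg_left h ht.1)
  linarith [(measureReal_mono (μ := P) hsub).trans (measureReal_union_le _ _)]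

end Concentration

section Discrepancy

variable {X κ : Type*} [MeasurableSpace X] [Fintype κ] {μ : Measure X} {z : κ → X}

/-- The discrepancy of the points `z` with respect to `μ` on a test set `A`, not normalised: the
number of points in `A` minus its expected value for independent points with law `μ`. -/
noncomputable def discrepancy (μ : Measure X) (z : κ → X) (A : Set X) : ℝ :=
  ∑ n, A.indicator 1 (z n) - Fintype.card κ * μ.real A

@[simp]
lemma discrepancy_empty : discrepancy μ z ∅ = 0 := by simp [discrepancy]

lemma discrepancy_diff [IsFiniteMeasure μ] {A B : Set X} (hB : MeasurableSet B) (hBA : B ⊆ A) :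
    discrepancy μ z (A \ B) = discrepancy μ z A - discrepancy μ z B := by
  simp only [discrepancy, Set.indicator_sdiff hBA, Pi.sub_apply, sum_sub_distrib,
    measureReal_sdiff (μ := μ) hBA hB]
  ring

lemma abs_discrepancy_le_of_subset_of_subset [IsFiniteMeasure μ] {L A U : Set X} {η δ : ℝ}
    (hLA : L ⊆ A) (hAU : A ⊆ U) (hL : |discrepancy μ z L| ≤ η) (hU : |discrepancy μ z U| ≤ η)
    (hδ : μ.real U - μ.real L ≤ δ) :
    |discrepancy μ z A| ≤ η + Fintype.card κ * δ := by
  have hcount {B C : Set X} (h : B ⊆ C) :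
      ∑ n, B.indicator (1 : X → ℝ) (z n) ≤ ∑ n, C.indicator 1 (z n) :=
    sum_le_sum fun n _ ↦ Set.indicator_le_indicator_of_subset h (fun _ ↦ zero_le_one) _
  have hvol {B C : Set X} (h : B ⊆ C) :
      (Fintype.card κ : ℝ) * μ.real B ≤ Fintype.card κ * μ.real C := by gcongr; simp
  have hbracket := mul_le_mul_of_nonneg_left hδ (Nat.cast_nonneg (α := ℝ) (Fintype.card κ))
  simp only [discrepancy, abs_le] at hL hU ⊢
  constructor <;> linarith [hcount hLA, hcount hAU, hvol hLA, hvol hAU]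

variable [IsProbabilityMeasure μ]

@[simp]
lemma discrepancy_univ : discrepancy μ z Set.univ = 0 := by simp [discrepancy]

lemma measureReal_le_abs_discrepancy_le {A : Set X} (hA : MeasurableSet A) {t : ℝ}
    (ht : t ∈ Set.Icc 0 1) (ε : ℝ) :
    (Measure.pi fun _ : κ ↦ μ).real {z | ε ≤ |discrepancy μ z A|} ≤
      2 * Real.exp (Fintype.card κ * μ.real A * t ^ 2 - t * ε) := by
  have hmeas : AEMeasurable (A.indicator (1 : X → ℝ)) μ :=
    (measurable_one.indicator hA).aemeasurable
  have hmean (n : κ) :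
      ∫ z, A.indicator (1 : X → ℝ) (z n) ∂(Measure.pi fun _ : κ ↦ μ) = μ.real A := by
    rw [integral_comp_eval (μ := fun _ : κ ↦ μ) (f := A.indicator 1) hmeas.aestronglyMeasurable,
      integral_indicator_one hA]
  have htail := measureReal_le_abs_sum_sub_le (iIndepFun_pi fun _ : κ ↦ hmeas)
    (fun n ↦ hmeas.comp_quasiMeasurePreserving (Measure.quasiMeasurePreserving_eval _ n))
    (fun n ↦ .of_forall fun z ↦ ⟨Set.indicator_nonneg (fun _ _ ↦ zero_le_one) _,
      Set.indicator_le_self' (fun _ _ ↦ zero_le_one) _⟩) ht ε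
  simpa only [discrepancy, hmean, sum_const, card_univ, nsmul_eq_mul] using htail

lemma exists_forall_abs_discrepancy_lt {J : Type*} (S : Finset J) {A : J → Set X} {t ε : J → ℝ}
    (hA : ∀ j ∈ S, MeasurableSet (A j)) (ht : ∀ j ∈ S, t j ∈ Set.Icc 0 1)
    (hsum : ∑ j ∈ S, 2 * Real.exp (Fintype.card κ * μ.real (A j) * t j ^ 2 - t j * ε j) < 1) :
    ∃ z : κ → X, ∀ j ∈ S, |discrepancy μ z (A j)| < ε j := by
  by_contra! hbad
  have hcover : ⋃ j ∈ S, {z : κ → X | ε j ≤ |discrepancy μ z (A j)|} = Set.univ :=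
    Set.eq_univ_of_forall fun z ↦ by simpa using hbad z
  have hunion := measureReal_biUnion_finset_le (μ := Measure.pi fun _ : κ ↦ μ) S
    fun j ↦ {z : κ → X | ε j ≤ |discrepancy μ z (A j)|}
  rw [hcover, probReal_univ] at hunion
  exact (hunion.trans (sum_le_sum fun j hj ↦
    measureReal_le_abs_discrepancy_le (hA j hj) (ht j hj) (ε j))).not_gt hsum

end Discrepancy

section Chaining

lemma abs_le_sum_range_of_chain {E : Type*} {f : E → ℝ} {S : ℕ → Set E} {r : ℕ → E → E}
    {ε : ℕ → ℝ} {K : ℕ} (hzero : ∀ b ∈ S 0, f b = 0)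
    (hr : ∀ k < K, ∀ b ∈ S (k + 1), r k b ∈ S k)
    (hstep : ∀ k < K, ∀ b ∈ S (k + 1), |f b - f (r k b)| ≤ ε k) :
    ∀ b ∈ S K, |f b| ≤ ∑ k ∈ range K, ε k := by
  induction K with
  | zero => exact fun b hb ↦ by simp [hzero b hb]
  | succ K ih =>
    intro b hb
    have hparent : |f (r K b)| ≤ ∑ k ∈ range K, ε k :=
      ih (fun k hk ↦ hr k (by omega)) (fun k hk ↦ hstep k (by omega)) _ (hr K (by omega) b hb)
    calc |f b| = |f (r K b) + (f b - f (r K b))| := by rw [add_sub_cancel]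
      _ ≤ |f (r K b)| + |f b - f (r K b)| := abs_add_le _ _
      _ ≤ ∑ k ∈ range (K + 1), ε k := by
        rw [sum_range_succ]
        exact add_le_add hparent (hstep K (by omega) b hb)

variable {X κ : Type*} [MeasurableSpace X] [Fintype κ] {μ : Measure X}

/-- `Γ` is a `δ`-bracketing family for the class `𝒜`: each member of `𝒜` lies between two members
of `Γ` whose measures differ by at most `δ`. -/
def IsBracketing (μ : Measure X) (δ : ℝ) (𝒜 Γ : Set (Set X)) : Prop :=
  ∀ A ∈ 𝒜, ∃ L ∈ Γ, ∃ U ∈ Γ, L ⊆ A ∧ A ⊆ U ∧ μ.real U - μ.real L ≤ δ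

variable [IsProbabilityMeasure μ]

lemma isBracketing_pair (𝒜 : Set (Set X)) : IsBracketing μ 1 𝒜 {∅, Set.univ} :=
  fun A _ ↦ ⟨∅, by simp, Set.univ, by simp, A.empty_subset, A.subset_univ, by simp⟩

variable {c T : ℝ} {K : ℕ}

lemma sum_exp_level_lt_one {E : Type*} {S : ℕ → Finset E}
    (hcard : ∀ k < K, 2 ^ (k + 2) * (#(S k) : ℝ) ≤ Real.exp (c * (9 * 4 ^ k))) :
    ∑ k ∈ range K, ∑ _b ∈ S k, 2 * Real.exp (-(c * (9 * 4 ^ k))) < 1 := by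
  calc _ ≤ ∑ k ∈ range K, (1 / 2 : ℝ) ^ k / 2 := by
        refine sum_le_sum fun k hk ↦ ?_
        have h := hcard k (mem_range.1 hk)
        rw [sum_const, nsmul_eq_mul, Real.exp_neg, ← div_eq_mul_inv, ← mul_div_assoc,
          div_le_iff₀ (Real.exp_pos _), one_div_pow, div_div, ← pow_succ, one_div,
          ← div_eq_inv_mul, le_div_iff₀ (by positivity)]
        refine le_of_eq_of_le ?_ h
        ring
    _ = 1 - (1 / 2) ^ K := by
        rw [← sum_div, geom_sum_eq (by norm_num)]
        ring
    _ < 1 := sub_lt_self _ (by positivity)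

lemma chernoff_exponent_le {N v : ℝ} {k : ℕ} (hT : 0 < T) (hcT : c * T ^ 2 = N) (hN : 0 ≤ N)
    (hv : v ≤ 1 / 100 ^ k) :
    N * v * (3 * 20 ^ k / T) ^ 2 - 3 * 20 ^ k / T * (6 * (N / T) * (1 / 5) ^ k) ≤
      -(c * (9 * 4 ^ k)) := by
  have h400 : (20 ^ k : ℝ) ^ 2 = 4 ^ k * 100 ^ k := by
    rw [← pow_mul, mul_comm, pow_mul, ← mul_pow]; norm_num
  have h20 : (20 ^ k : ℝ) * (1 / 5) ^ k = 4 ^ k := by rw [← mul_pow]; norm_num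
  have hvar : N * v * (3 * 20 ^ k / T) ^ 2 ≤ c * (9 * 4 ^ k) :=
    calc N * v * (3 * 20 ^ k / T) ^ 2 ≤ N * (1 / 100 ^ k) * (3 * 20 ^ k / T) ^ 2 := by gcongr
      _ = c * (9 * 4 ^ k) := by rw [← hcT, div_pow, mul_pow, h400]; field_simp; norm_num
  have hdev : 3 * 20 ^ k / T * (6 * (N / T) * (1 / 5) ^ k) = 2 * (c * (9 * 4 ^ k)) := by
    rw [← h20, ← hcT]; field_simp; ring
  linarith

lemma exists_forall_abs_discrepancy_diff_lt {S : ℕ → Finset (Set X)} {r : ℕ → Set X → Set X}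
    (hT : 0 < T) (hcT : c * T ^ 2 = Fintype.card κ) (hK : ∀ k < K, 3 * 20 ^ k ≤ T)
    (hmeas : ∀ k < K, ∀ b ∈ S k, MeasurableSet (b \ r k b))
    (hvol : ∀ k < K, ∀ b ∈ S k, μ.real (b \ r k b) ≤ 1 / 100 ^ k)
    (hcard : ∀ k < K, 2 ^ (k + 2) * (#(S k) : ℝ) ≤ Real.exp (c * (9 * 4 ^ k))) :
    ∃ z : κ → X, ∀ k < K, ∀ b ∈ S k,
      |discrepancy μ z (b \ r k b)| < 6 * (Fintype.card κ / T) * (1 / 5) ^ k := by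
  obtain ⟨z, hz⟩ := exists_forall_abs_discrepancy_lt (κ := κ) (μ := μ) ((range K).sigma S)
    (A := fun j ↦ j.2 \ r j.1 j.2) (t := fun j ↦ 3 * 20 ^ j.1 / T)
    (ε := fun j ↦ 6 * (Fintype.card κ / T) * (1 / 5) ^ j.1)
    (fun j hj ↦ by
      obtain ⟨hk, hb⟩ := mem_sigma.1 hj
      exact hmeas _ (mem_range.1 hk) _ hb)
    (fun j hj ↦ by
      obtain ⟨hk, -⟩ := mem_sigma.1 hj
      exact ⟨by positivity, (div_le_one hT).2 (hK _ (mem_range.1 hk))⟩)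
    (by
      rw [sum_sigma]
      refine (sum_le_sum fun k hk ↦ sum_le_sum fun b hb ↦ ?_).trans_lt (sum_exp_level_lt_one hcard)
      gcongr
      exact chernoff_exponent_le hT hcT (Nat.cast_nonneg _) (hvol k (mem_range.1 hk) b hb))
  exact ⟨z, fun k hk b hb ↦ hz ⟨k, b⟩ (mem_sigma.2 ⟨mem_range.2 hk, hb⟩)⟩

lemma exists_forall_mem_abs_discrepancy_le {Γ : ℕ → Finset (Set X)}
    (hT : 0 < T) (hcT : c * T ^ 2 = Fintype.card κ) (hK : ∀ k < K, 3 * 20 ^ k ≤ T)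
    (hzero : (Γ 0 : Set (Set X)) ⊆ {∅, Set.univ})
    (hmeas : ∀ k, ∀ b ∈ Γ k, MeasurableSet b)
    (hbr : ∀ k < K, IsBracketing μ (1 / 100 ^ k) (Γ (k + 1)) (Γ k))
    (hcard : ∀ k < K, 2 ^ (k + 2) * (#(Γ (k + 1)) : ℝ) ≤ Real.exp (c * (9 * 4 ^ k))) :
    ∃ z : κ → X, ∀ b ∈ Γ K, |discrepancy μ z b| ≤ 7.5 / T * Fintype.card κ := by
  have hlower : ∀ k b, ∃ L, k < K → b ∈ Γ (k + 1) →
      L ∈ Γ k ∧ L ⊆ b ∧ μ.real (b \ L) ≤ 1 / 100 ^ k := by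
    intro k b
    by_cases h : k < K ∧ b ∈ Γ (k + 1)
    · obtain ⟨L, hL, U, -, hLb, hbU, hUL⟩ := hbr k h.1 b h.2
      refine ⟨L, fun _ _ ↦ ⟨hL, hLb, ?_⟩⟩
      rw [measureReal_sdiff hLb (hmeas k L hL)]
      linarith [measureReal_mono (μ := μ) hbU]
    · exact ⟨∅, fun hk hb ↦ absurd ⟨hk, hb⟩ h⟩
  choose r hr using hlower
  obtain ⟨z, hz⟩ := exists_forall_abs_discrepancy_diff_lt (κ := κ) (μ := μ)
    (S := fun k ↦ Γ (k + 1)) (r := r) hT hcT hK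
    (fun k hk b hb ↦ (hmeas _ b hb).diff (hmeas _ _ (hr k b hk hb).1))
    (fun k hk b hb ↦ (hr k b hk hb).2.2) hcard
  refine ⟨z, fun b hb ↦ ?_⟩
  have hchain := abs_le_sum_range_of_chain (f := discrepancy μ z) (S := fun k ↦ (Γ k : Set (Set X)))
    (fun b hb ↦ by rcases hzero hb with rfl | rfl <;> simp)
    (fun k hk b hb ↦ (hr k b hk hb).1)
    (fun k hk b hb ↦ by
      obtain ⟨hL, hLb, -⟩ := hr k b hk hb
      rw [← discrepancy_diff (hmeas k _ hL) hLb]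
      exact (hz k hk b hb).le) b hb
  calc |discrepancy μ z b| ≤ 6 * (Fintype.card κ / T) * ∑ k ∈ range K, (1 / 5) ^ k := by
        rwa [mul_sum]
    _ ≤ 6 * (Fintype.card κ / T) * (5 / 4) := by
        gcongr
        rw [geom_sum_eq (by norm_num), div_le_iff_of_neg (by norm_num)]
        linarith [pow_pos (show (0 : ℝ) < 1 / 5 by norm_num) K]
    _ = 7.5 / T * Fintype.card κ := by ring

lemma exists_chaining_depth (hT : 3 ≤ T) :
    ∃ K : ℕ, T ≤ 1.4 * 100 ^ K ∧ ∀ k < K, 3 * 20 ^ k ≤ T := by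
  obtain ⟨m, hlow, hhigh⟩ := exists_nat_pow_near (x := T / 1.4) (y := 100)
    (by rw [le_div_iff₀] <;> linarith) (by norm_num)
  refine ⟨m + 1, by linarith [(div_lt_iff₀ (by norm_num)).1 hhigh], ?_⟩
  rintro (_ | k) hk
  · simpa using hT
  · have h5 : (5 : ℝ) ≤ 5 ^ (k + 1) := le_self_pow₀ (by norm_num) k.succ_ne_zero
    calc (3 : ℝ) * 20 ^ (k + 1) ≤ 1.4 * (5 ^ (k + 1) * 20 ^ (k + 1)) := by
          nlinarith [pow_pos (show (0 : ℝ) < 20 by norm_num) (k + 1)]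
      _ = 1.4 * 100 ^ (k + 1) := by rw [← mul_pow]; norm_num
      _ ≤ 1.4 * 100 ^ m := by gcongr <;> [norm_num; omega]
      _ ≤ T := by linarith [(le_div_iff₀ (by norm_num)).1 hlow]

theorem exists_abs_discrepancy_le_of_bracketing {𝒜 : Set (Set X)} (hT : 3 ≤ T)
    (hcT : c * T ^ 2 = Fintype.card κ) (h𝒜 : ∀ A ∈ 𝒜, MeasurableSet A)
    (hentropy : ∀ k, ∃ Γ : Finset (Set X), (Γ : Set (Set X)) ⊆ 𝒜 ∧
      IsBracketing μ (1 / 100 ^ (k + 1)) 𝒜 Γ ∧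
      2 ^ (k + 2) * (#Γ : ℝ) ≤ Real.exp (c * (9 * 4 ^ k))) :
    ∃ z : κ → X, ∀ A ∈ 𝒜, |discrepancy μ z A| ≤ 8.9 / T * Fintype.card κ := by
  classical
  have hT0 : 0 < T := by linarith
  choose Γ hΓ𝒜 hΓ hcard using hentropy
  let Λ : ℕ → Finset (Set X)
    | 0 => {∅, Set.univ}
    | k + 1 => Γ k
  have hΛ : ∀ k, IsBracketing μ (1 / 100 ^ k) 𝒜 (Λ k)
    | 0 => by simpa [Λ] using isBracketing_pair (μ := μ) 𝒜
    | k + 1 => hΓ k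
  have hmeas : ∀ k, ∀ b ∈ Λ k, MeasurableSet b
    | 0, b, hb => by
      rcases show b = ∅ ∨ b = Set.univ by simpa [Λ] using hb with rfl | rfl
      exacts [.empty, .univ]
    | k + 1, b, hb => h𝒜 b (hΓ𝒜 k hb)
  obtain ⟨K, hTK, hK⟩ := exists_chaining_depth hT
  obtain ⟨z, hz⟩ := exists_forall_mem_abs_discrepancy_le (κ := κ) (μ := μ) (Γ := Λ) hT0 hcT hK
    (by simp [Λ]) hmeas (fun k _ b hb ↦ hΛ k b (hΓ𝒜 k hb)) (fun k _ ↦ hcard k)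
  refine ⟨z, fun A hA ↦ ?_⟩
  obtain ⟨L, hL, U, hU, hLA, hAU, hUL⟩ := hΛ K A hA
  have hδ : (1 : ℝ) / 100 ^ K ≤ 1.4 / T := by
    rwa [div_le_div_iff₀ (by positivity) hT0, one_mul]
  calc |discrepancy μ z A| ≤ 7.5 / T * Fintype.card κ + Fintype.card κ * (1.4 / T) :=
        abs_discrepancy_le_of_subset_of_subset hLA hAU (hz L hL) (hz U hU) (hUL.trans hδ)
    _ = 8.9 / T * Fintype.card κ := by ring

end Chaining

section LatticeSimplex

variable {ι : Type*} [Fintype ι]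

open Classical in
/-- The lattice points `n : ι → ℕ` of the simplex `∑ i, n i ≤ M`; the coordinate `none` is the slack
variable. -/
noncomputable def latticeSimplex (ι : Type*) [Fintype ι] (M : ℕ) : Finset (ι → ℕ) :=
  ((univ : Finset (Option ι)).finsuppAntidiag M).image fun f i ↦ f (some i)

lemma mem_latticeSimplex {M : ℕ} {n : ι → ℕ} : n ∈ latticeSimplex ι M ↔ ∑ i, n i ≤ M := by
  simp only [latticeSimplex, mem_image, mem_finsuppAntidiag, subset_univ, and_true,
    Fintype.sum_option]
  constructor
  · rintro ⟨f, hf, rfl⟩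
    exact hf ▸ Nat.le_add_left _ _
  · intro hn
    refine ⟨Finsupp.equivFunOnFinite.symm fun o ↦ o.elim (M - ∑ i, n i) n, ?_, rfl⟩
    simpa using Nat.sub_add_cancel hn

lemma card_latticeSimplex_le (M : ℕ) :
    #(latticeSimplex ι M) ≤ (Fintype.card ι + M).choose (Fintype.card ι) := by
  classical
  refine card_image_le.trans ?_
  rw [card_finsuppAntidiag_nat_eq_choose, card_univ, Fintype.card_option, Nat.choose_symm_add]
  exact le_of_eq (by congr 1; omega)

lemma card_latticeSimplex_card_mul_le (m : ℕ) :
    (#(latticeSimplex ι (Fintype.card ι * m)) : ℝ) ≤ (Real.exp 1 * (m + 1)) ^ Fintype.card ι := by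
  set s := Fintype.card ι
  calc (#(latticeSimplex ι (s * m)) : ℝ) ≤ (s + s * m).choose s := by
        exact_mod_cast card_latticeSimplex_le _
    _ ≤ (s + s * m : ℕ) ^ s / s.factorial := Nat.choose_le_pow_div _ _
    _ = (s : ℝ) ^ s / s.factorial * (m + 1) ^ s := by
        rw [div_mul_eq_mul_div, ← mul_pow]
        push_cast
        ring
    _ ≤ Real.exp s * (m + 1) ^ s := by
        gcongr
        exact Real.pow_div_factorial_le_exp _ s.cast_nonneg _
    _ = (Real.exp 1 * (m + 1)) ^ s := by rw [mul_pow, ← Real.exp_nat_mul, mul_one]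

lemma exists_sum_eq_or_forall_not_succ {P : ι → ℕ → Prop} (hP : ∀ i, P i 0) (M : ℕ) :
    ∃ n : ι → ℕ, ∑ i, n i ≤ M ∧ (∀ i, P i (n i)) ∧ (∑ i, n i = M ∨ ∀ i, ¬ P i (n i + 1)) := by
  classical
  induction M with
  | zero => exact ⟨0, by simp, hP, .inl (by simp)⟩
  | succ M ih =>
    obtain ⟨n, hle, hn, hsum | hmax⟩ := ih
    · by_cases hmax : ∀ i, ¬ P i (n i + 1)
      · exact ⟨n, by omega, hn, .inr hmax⟩
      push Not at hmax
      obtain ⟨i, hi⟩ := hmax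
      have hsum' : ∑ j, Function.update n i (n i + 1) j = M + 1 := by
        rw [sum_update_of_mem (mem_univ i), sdiff_singleton_eq_erase, add_right_comm,
          add_sum_erase _ _ (mem_univ i), hsum]
      refine ⟨Function.update n i (n i + 1), hsum'.le, fun j ↦ ?_, .inl hsum'⟩
      rcases eq_or_ne j i with rfl | hj
      · simpa using hi
      · simpa [hj] using hn j
    · exact ⟨n, by omega, hn, .inr hmax⟩

end LatticeSimplex

section AnchoredBox

open unitInterval

variable {ι : Type*}

/-- The half-open box `∏ i, [0, b i)` in the unit cube. -/
def anchoredBox (b : ι → I) : Set (ι → I) := Set.univ.pi fun i ↦ Set.Iio (b i)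

lemma mem_anchoredBox {b x : ι → I} : x ∈ anchoredBox b ↔ ∀ i, x i < b i := by
  simp [anchoredBox]

lemma anchoredBox_mono : Monotone (anchoredBox (ι := ι)) :=
  fun _ _ h ↦ Set.pi_mono fun i _ ↦ Set.Iio_subset_Iio (h i)

lemma anchoredBox_zero [Nonempty ι] : anchoredBox (0 : ι → I) = ∅ :=
  Set.univ_pi_eq_empty_iff.2 ⟨Classical.arbitrary ι, Set.Iio_bot⟩

lemma measurableSet_anchoredBox [Countable ι] (b : ι → I) : MeasurableSet (anchoredBox b) :=
  .univ_pi fun _ ↦ measurableSet_Iio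

variable [Fintype ι]

lemma volume_real_anchoredBox (b : ι → I) : volume.real (anchoredBox b) = ∏ i, (b i : ℝ) := by
  simp [anchoredBox, measureReal_def, volume_pi_pi, ENNReal.toReal_prod, nonneg]

lemma volume_real_anchoredBox_pow (q : I) (n : ι → ℕ) :
    volume.real (anchoredBox fun i ↦ q ^ n i) = (q : ℝ) ^ ∑ i, n i := by
  simp [volume_real_anchoredBox, prod_pow_eq_pow_sum]

open Classical in
/-- The anchored boxes whose upper corner has coordinates `q ^ n i` with `∑ i, n i ≤ M`, together
with the empty set. Geometric coordinates make the volume depend only on `∑ i, n i`. -/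
noncomputable def gridBoxes (ι : Type*) [Fintype ι] (q : I) (M : ℕ) : Finset (Set (ι → I)) :=
  insert ∅ ((latticeSimplex ι M).image fun n ↦ anchoredBox fun i ↦ q ^ n i)

lemma anchoredBox_pow_mem_gridBoxes {q : I} {M : ℕ} {n : ι → ℕ} (hn : ∑ i, n i ≤ M) :
    (anchoredBox fun i ↦ q ^ n i) ∈ gridBoxes ι q M :=
  mem_insert_of_mem (mem_image_of_mem _ (mem_latticeSimplex.2 hn))

lemma gridBoxes_subset_range [Nonempty ι] (q : I) (M : ℕ) :
    (gridBoxes ι q M : Set (Set (ι → I))) ⊆ Set.range anchoredBox := by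
  intro A hA
  rcases mem_insert.1 hA with rfl | hA
  · exact ⟨0, anchoredBox_zero⟩
  · obtain ⟨n, -, rfl⟩ := mem_image.1 hA
    exact Set.mem_range_self _

lemma card_gridBoxes_card_mul_le (q : I) (m : ℕ) :
    (#(gridBoxes ι q (Fintype.card ι * m)) : ℝ) ≤
      (Real.exp 1 * (m + 1)) ^ Fintype.card ι + 1 := by
  classical
  have hcard : #(gridBoxes ι q (Fintype.card ι * m)) ≤
      #(latticeSimplex ι (Fintype.card ι * m)) + 1 :=
    (card_insert_le _ _).trans (Nat.succ_le_succ card_image_le)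
  calc (#(gridBoxes ι q (Fintype.card ι * m)) : ℝ)
      ≤ #(latticeSimplex ι (Fintype.card ι * m)) + 1 := by exact_mod_cast hcard
    _ ≤ _ := by gcongr; exact card_latticeSimplex_card_mul_le m

-- Lower the upper corner one grid step at a time, keeping it above `a`. If the budget runs out, it
-- bounds a box so small that `∅` serves as lower bracket; otherwise one more step in every
-- coordinate goes below `a`.
lemma isBracketing_gridBoxes {q : I} {δ : ℝ} {R : ℕ} (hq : 1 - (q : ℝ) ^ Fintype.card ι ≤ δ)
    (hR : (q : ℝ) ^ (Fintype.card ι * R) ≤ δ) :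
    IsBracketing volume δ (Set.range (anchoredBox (ι := ι)))
      (gridBoxes ι q (Fintype.card ι * (R + 1))) := by
  rintro _ ⟨a, rfl⟩
  obtain ⟨n, hle, hupper, hn⟩ := exists_sum_eq_or_forall_not_succ (P := fun i m ↦ a i ≤ q ^ m)
    (fun i ↦ by simpa using le_one') (Fintype.card ι * R)
  have hsub : anchoredBox a ⊆ anchoredBox fun i ↦ q ^ n i := anchoredBox_mono hupper
  have hmem : (anchoredBox fun i ↦ q ^ n i) ∈ gridBoxes ι q (Fintype.card ι * (R + 1)) :=
    anchoredBox_pow_mem_gridBoxes (hle.trans (Nat.mul_le_mul_left _ R.le_succ))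
  rcases hn with hsum | hlower
  · refine ⟨∅, mem_insert_self _ _, _, hmem, Set.empty_subset _, hsub, ?_⟩
    rwa [volume_real_anchoredBox_pow, hsum, measureReal_empty, sub_zero]
  · have hsucc : ∑ i, (n i + 1) = ∑ i, n i + Fintype.card ι := by simp [sum_add_distrib]
    refine ⟨_, anchoredBox_pow_mem_gridBoxes (n := fun i ↦ n i + 1) (hsucc.trans_le ?_), _, hmem,
      anchoredBox_mono fun i ↦ (not_le.1 (hlower i)).le, hsub, ?_⟩
    · rw [mul_add_one]
      gcongr
    · rw [volume_real_anchoredBox_pow, volume_real_anchoredBox_pow, hsucc, pow_add]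
      calc (q : ℝ) ^ (∑ i, n i) - q ^ (∑ i, n i) * q ^ Fintype.card ι
          = q ^ (∑ i, n i) * (1 - q ^ Fintype.card ι) := by ring
        _ ≤ 1 - (q : ℝ) ^ Fintype.card ι :=
          mul_le_of_le_one_left (sub_nonneg.2 (pow_le_one₀ q.2.1 q.2.2)) (pow_le_one₀ q.2.1 q.2.2)
        _ ≤ δ := hq

lemma exists_isBracketing_anchoredBox [Nonempty ι] {δ : ℝ} (hδ : δ ∈ Set.Icc 0 1) {R : ℕ}
    (hR : (1 - δ) ^ R ≤ δ) :
    ∃ Γ : Finset (Set (ι → I)), (Γ : Set (Set (ι → I))) ⊆ Set.range anchoredBox ∧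
      IsBracketing volume δ (Set.range (anchoredBox (ι := ι))) Γ ∧
      (#Γ : ℝ) ≤ (Real.exp 1 * (R + 2)) ^ Fintype.card ι + 1 := by
  have h0 : 0 ≤ 1 - δ := sub_nonneg.2 hδ.2
  let q : I := ⟨(1 - δ) ^ (Fintype.card ι : ℝ)⁻¹, by positivity,
    Real.rpow_le_one h0 (sub_le_self 1 hδ.1) (by positivity)⟩
  have hq : (q : ℝ) ^ Fintype.card ι = 1 - δ := Real.rpow_inv_natCast_pow h0 Fintype.card_ne_zero
  refine ⟨gridBoxes ι q (Fintype.card ι * (R + 1)), gridBoxes_subset_range _ _,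
    isBracketing_gridBoxes ?_ ?_, (card_gridBoxes_card_mul_le q (R + 1)).trans_eq ?_⟩
  · rw [hq, sub_sub_cancel]
  · rwa [pow_mul, hq]
  · push_cast
    ring

end AnchoredBox

section Entropy

lemma one_sub_pow_le_one_div_hundred_pow (k : ℕ) :
    (1 - 1 / 100 ^ (k + 1) : ℝ) ^ (5 * (k + 1) * 100 ^ (k + 1)) ≤ 1 / 100 ^ (k + 1) := by
  have h100 : (100 : ℝ) ≤ Real.exp 5 := by
    calc (100 : ℝ) ≤ 2.7 ^ 5 := by norm_num
      _ ≤ Real.exp 1 ^ 5 := by gcongr; linarith [Real.exp_one_gt_d9]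
      _ = Real.exp 5 := by rw [← Real.exp_nat_mul]; norm_num
  calc (1 - 1 / 100 ^ (k + 1) : ℝ) ^ (5 * (k + 1) * 100 ^ (k + 1))
      ≤ Real.exp (-(1 / 100 ^ (k + 1))) ^ (5 * (k + 1) * 100 ^ (k + 1)) := by
        gcongr
        · rw [sub_nonneg, div_le_one (by positivity)]
          exact one_le_pow₀ (by norm_num)
        · exact Real.one_sub_le_exp_neg _
    _ = 1 / Real.exp 5 ^ (k + 1) := by
        rw [← Real.exp_nat_mul, ← Real.exp_nat_mul, one_div, one_div, ← Real.exp_neg]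
        congr 1
        push_cast
        field_simp
    _ ≤ 1 / 100 ^ (k + 1) := by gcongr

lemma two_pow_mul_exp_mul_add_one_le (k : ℕ) :
    2 ^ (k + 2) * (Real.exp 1 * (5 * (k + 1) * 100 ^ (k + 1) + 2) + 1) ≤ Real.exp (9 * 4 ^ k) := by
  have hk : (k + 1 : ℝ) ≤ 2 ^ k := by exact_mod_cast Nat.succ_le_of_lt k.lt_two_pow_self
  have h100 : (1 : ℝ) ≤ 2 ^ k * 100 ^ k :=
    one_le_mul_of_one_le_of_one_le (one_le_pow₀ (by norm_num)) (one_le_pow₀ (by norm_num))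
  have h400 : (400 : ℝ) ≤ Real.exp 27 :=
    le_trans (by norm_num [Nat.factorial]) (Real.pow_div_factorial_le_exp 27 (by norm_num) 3)
  have hconst : 4 * (502 * Real.exp 1 + 1) ≤ Real.exp 9 := by
    calc 4 * (502 * Real.exp 1 + 1) ≤ 2.7 ^ 9 := by linarith [Real.exp_one_lt_d9]
      _ ≤ Real.exp 1 ^ 9 := by gcongr; linarith [Real.exp_one_gt_d9]
      _ = Real.exp 9 := by rw [← Real.exp_nat_mul]; norm_num
  calc 2 ^ (k + 2) * (Real.exp 1 * (5 * (k + 1) * 100 ^ (k + 1) + 2) + 1)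
      = 4 * 2 ^ k * (500 * Real.exp 1 * ((k + 1) * 100 ^ k) + (2 * Real.exp 1 + 1) * 1) := by ring
    _ ≤ 4 * 2 ^ k * (500 * Real.exp 1 * (2 ^ k * 100 ^ k) +
          (2 * Real.exp 1 + 1) * (2 ^ k * 100 ^ k)) := by gcongr
    _ = 4 * (502 * Real.exp 1 + 1) * (2 * 2 * 100) ^ k := by rw [mul_pow, mul_pow]; ring
    _ ≤ Real.exp 9 * Real.exp 27 ^ k := by
        gcongr
        linarith
    _ = Real.exp (9 * (1 + k * 3)) := by rw [← Real.exp_nat_mul, ← Real.exp_add]; ring_nf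
    _ ≤ Real.exp (9 * 4 ^ k) := by
        gcongr
        exact (one_add_mul_le_pow (by norm_num) k).trans_eq (by norm_num)

lemma mul_pow_add_one_le_exp_mul {s : ℕ} (hs : s ≠ 0) {a x y : ℝ} (ha : 1 ≤ a) (hx : 0 ≤ x)
    (h : a * (x + 1) ≤ Real.exp y) : a * (x ^ s + 1) ≤ Real.exp (s * y) := by
  have hpow : x ^ s + 1 ≤ (x + 1) ^ s := by simpa using pow_add_pow_le hx zero_le_one hs
  calc a * (x ^ s + 1) ≤ a ^ s * (x + 1) ^ s :=
        mul_le_mul (le_self_pow₀ ha hs) hpow (by positivity) (by positivity)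
    _ = (a * (x + 1)) ^ s := (mul_pow _ _ _).symm
    _ ≤ Real.exp y ^ s := by gcongr
    _ = Real.exp (s * y) := (Real.exp_nat_mul _ _).symm

end Entropy

theorem exists_abs_discrepancy_anchoredBox_le {ι κ : Type*} [Fintype ι] [Nonempty ι] [Fintype κ]
    {T : ℝ} (hT : 3 ≤ T) (hcard : Fintype.card ι * T ^ 2 = Fintype.card κ) :
    ∃ z : κ → ι → unitInterval, ∀ b : ι → unitInterval,
      |discrepancy volume z (anchoredBox b)| ≤ 8.9 / T * Fintype.card κ := by
  obtain ⟨z, hz⟩ := exists_abs_discrepancy_le_of_bracketing (κ := κ)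
    (μ := (volume : Measure (ι → unitInterval))) (𝒜 := Set.range anchoredBox) hT hcard
    (Set.forall_mem_range.2 measurableSet_anchoredBox) fun k ↦ by
      obtain ⟨Γ, hΓ, hbr, hΓcard⟩ := exists_isBracketing_anchoredBox (ι := ι)
        ⟨by positivity, (div_le_one (by positivity)).2 (one_le_pow₀ (by norm_num))⟩
        (one_sub_pow_le_one_div_hundred_pow k)
      push_cast at hΓcard
      exact ⟨Γ, hΓ, hbr, le_trans (by gcongr) (mul_pow_add_one_le_exp_mul Fintype.card_ne_zero
        (one_le_pow₀ one_le_two) (by positivity) (two_pow_mul_exp_mul_add_one_le k))⟩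
  exact ⟨z, fun b ↦ hz _ (Set.mem_range_self b)⟩

section StarDiscrepancy

variable {s N : ℕ}

/-- The star-discrepancy of a finite sequence in `[0, 1]^s`: the supremum over all anchored boxes of
the distance between the proportion of points in the box and its volume. -/
noncomputable def starDiscrepancy (z : Fin N → Fin s → ℝ) : ℝ :=
  sSup {d : ℝ | ∃ a : Fin s → ℝ, (∀ i, a i ∈ Set.Icc 0 1) ∧
    d = |(#{n | ∀ i, z n i < a i} : ℝ) / N - ∏ i, a i|}

lemma starDiscrepancy_le_one (z : Fin N → Fin s → ℝ) : starDiscrepancy z ≤ 1 := by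
  refine Real.sSup_le ?_ zero_le_one
  rintro _ ⟨a, ha, rfl⟩
  have hcount : (#{n | ∀ i, z n i < a i} : ℝ) / N ≤ 1 :=
    div_le_one_of_le₀ (by exact_mod_cast (card_le_univ _).trans_eq (Fintype.card_fin N))
      N.cast_nonneg
  have hvol : ∏ i, a i ∈ Set.Icc 0 1 :=
    ⟨prod_nonneg fun i _ ↦ (ha i).1, prod_le_one (fun i _ ↦ (ha i).1) fun i _ ↦ (ha i).2⟩
  exact abs_sub_le_of_nonneg_of_le (by positivity) hcount hvol.1 hvol.2

lemma discrepancy_volume_anchoredBox (z : Fin N → Fin s → unitInterval)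
    (b : Fin s → unitInterval) :
    discrepancy volume z (anchoredBox b) =
      #{n | ∀ i, (z n i : ℝ) < b i} - N * ∏ i, (b i : ℝ) := by
  classical
  simp [discrepancy, volume_real_anchoredBox, Set.indicator_apply, mem_anchoredBox]

lemma starDiscrepancy_le (hN : N ≠ 0) {z : Fin N → Fin s → unitInterval} {η : ℝ}
    (hz : ∀ b, |discrepancy volume z (anchoredBox b)| ≤ η * N) :
    starDiscrepancy (fun n i ↦ (z n i : ℝ)) ≤ η := by
  have hN0 : (0 : ℝ) < N := by positivity
  refine Real.sSup_le ?_ (nonneg_of_mul_nonneg_left ((abs_nonneg _).trans (hz 0)) hN0)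
  rintro _ ⟨a, ha, rfl⟩
  lift a to Fin s → unitInterval using ha
  have h := hz a
  rw [discrepancy_volume_anchoredBox, ← div_le_iff₀ hN0] at h
  rwa [← mul_div_cancel_left₀ (∏ i, (a i : ℝ)) hN0.ne', ← sub_div, abs_div, Nat.abs_cast]

end StarDiscrepancy

/-- **Main theorem (Pasing–Weiß).** For every dimension `s ≥ 1` and every `N ≥ 1` there is a
finite sequence `z 1, …, z N` of points in the `s`-dimensional unit cube whose star-discrepancy
`D*_N(z) = sup_{a ∈ [0,1]^s} | #{n : z n ∈ [0,a)} / N − ∏ i, a i |` is less than `9 √s / √N`. -/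
theorem star_discrepancy_bound (s N : ℕ) (hs : 1 ≤ s) (hN : 1 ≤ N) :
    ∃ z : Fin N → (Fin s → ℝ),
      (∀ n, ∀ i, z n i ∈ Set.Icc (0 : ℝ) 1) ∧
      sSup { d : ℝ | ∃ a : Fin s → ℝ, (∀ i, a i ∈ Set.Icc (0 : ℝ) 1) ∧
          d = |((Finset.univ.filter fun n : Fin N => ∀ i, z n i < a i).card : ℝ) / N
                - ∏ i, a i| }
        < 9 * Real.sqrt s / Real.sqrt N := by
  set T : ℝ := √N / √s with hT
  have hT0 : 0 < T := by positivity
  have hbound : 9 * √s / √N = 9 / T := by rw [hT, div_div_eq_mul_div]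
  rw [hbound]
  rcases lt_or_ge T 9 with hsmall | hlarge
  · exact ⟨0, by simp, (starDiscrepancy_le_one 0).trans_lt ((one_lt_div hT0).2 hsmall)⟩
  · have : NeZero s := ⟨by omega⟩
    have hcard : s * T ^ 2 = N := by
      rw [hT, div_pow, Real.sq_sqrt s.cast_nonneg, Real.sq_sqrt N.cast_nonneg]
      field_simp
    obtain ⟨z, hz⟩ := exists_abs_discrepancy_anchoredBox_le (ι := Fin s) (κ := Fin N) (T := T)
      (by linarith) (by simpa only [Fintype.card_fin] using hcard)
    rw [Fintype.card_fin] at hz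
    refine ⟨fun n i ↦ z n i, fun n i ↦ (z n i).2,
      (starDiscrepancy_le (by omega) hz).trans_lt ?_⟩
    gcongr
    norm_num
end

section
/- For every s ∈ ℕ, s ≥ 1, and every 0 < δ ≤ 1, there exists a δ-bracketing cover of [0,1]^s of cardinality at most 2^{s−2}·(s^s/s!)·(δ^{−1}+1)^s + (1/2)·(δ^{−1}+1); that is, the bracketing number satisfies N_[](s,δ) ≤ 2^{s−2}·(s^s/s!)·(δ^{−1}+1)^s + (1/2)·(δ^{−1}+1). -/
open Finset

/-- `B` is a `δ`-bracketing cover of `[0,1]^s`: a finite set of pairs `(v, w)` of points of the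
unit cube with `v ≤ w` componentwise and `∏ i, w i − ∏ i, v i ≤ δ`, such that every point `x` of
the unit cube satisfies `v ≤ x ≤ w` componentwise for some `(v, w) ∈ B`. -/
def IsBracketingCover (s : ℕ) (δ : ℝ) (B : Finset ((Fin s → ℝ) × (Fin s → ℝ))) : Prop :=
  (∀ p ∈ B, (∀ i, p.1 i ∈ Set.Icc (0 : ℝ) 1) ∧ (∀ i, p.2 i ∈ Set.Icc (0 : ℝ) 1) ∧
      p.1 ≤ p.2 ∧ ∏ i, p.2 i - ∏ i, p.1 i ≤ δ) ∧
  ∀ x : Fin s → ℝ, (∀ i, x i ∈ Set.Icc (0 : ℝ) 1) → ∃ p ∈ B, p.1 ≤ x ∧ x ≤ p.2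

/-!
By induction on `s`, whenever `s ≤ n` the cube `[0,1]^s` has an `s/n`-bracketing cover by
`n.choose s` brackets. In dimension `s + 1`, cut the cube along the first coordinate into the slab
`[0, (s+1)/n]`, which is a single bracket, and the slabs `[m/n, (m+1)/n]` for `s + 1 ≤ m < n`. On
the latter put an `s/m`-bracketing cover in the remaining coordinates: its error is scaled by the
lower end `m/n`, so the total is at most `(m/n)(s/m) + 1/n = (s+1)/n`. The cardinalities add up by
Pascal's rule. Taking `n = s⌈δ⁻¹⌉` gives the bound `(s^s / s!) (δ⁻¹ + 1)^s`, which for `s ≥ 2` is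
already below the first summand of the claim and for `s = 1` equals the sum of the two.
-/

section Brackets

variable {ι : Type*} [Fintype ι] {δ ε : ℝ} {k l : ℕ} {S T : Set (ι → ℝ)}

/-- A `δ`-bracket: a pair `(v, w)` of points of the unit cube with `v ≤ w` such that the boxes
`[0, v]` and `[0, w]` differ in volume by at most `δ`. -/
structure IsBracket (δ : ℝ) (p : (ι → ℝ) × (ι → ℝ)) : Prop where
  zero_le_fst : 0 ≤ p.1
  fst_le_snd : p.1 ≤ p.2
  snd_le_one : p.2 ≤ 1
  prod_sub_prod_le : ∏ i, p.2 i - ∏ i, p.1 i ≤ δ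

/-- `S` is covered by at most `k` many `δ`-brackets. With `S` the unit cube this says that the
bracketing number `N_[](s, δ)` is at most `k`; other `S` occur as slabs of the cube. -/
def HasBracketingCover (δ : ℝ) (k : ℕ) (S : Set (ι → ℝ)) : Prop :=
  ∃ B : Finset ((ι → ℝ) × (ι → ℝ)),
    (∀ p ∈ B, IsBracket δ p) ∧ (∀ x ∈ S, ∃ p ∈ B, x ∈ Set.Icc p.1 p.2) ∧ B.card ≤ k

theorem IsBracket.mono {p : (ι → ℝ) × (ι → ℝ)} (hp : IsBracket δ p) (hδε : δ ≤ ε) :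
    IsBracket ε p :=
  { hp with prod_sub_prod_le := hp.prod_sub_prod_le.trans hδε }

namespace HasBracketingCover

theorem mono (hS : HasBracketingCover δ k S) (hδε : δ ≤ ε) : HasBracketingCover ε k S := by
  obtain ⟨B, hB, hcover, hcard⟩ := hS
  exact ⟨B, fun p hp => (hB p hp).mono hδε, hcover, hcard⟩

theorem union (hS : HasBracketingCover δ k S) (hT : HasBracketingCover δ l T) :
    HasBracketingCover δ (k + l) (S ∪ T) := by
  classical
  obtain ⟨B, hB, hBcover, hBcard⟩ := hS
  obtain ⟨C, hC, hCcover, hCcard⟩ := hT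
  refine ⟨B ∪ C, fun p hp => (Finset.mem_union.1 hp).elim (hB p) (hC p), ?_,
    (Finset.card_union_le B C).trans (Nat.add_le_add hBcard hCcard)⟩
  rintro x (hx | hx)
  · obtain ⟨p, hp, hxp⟩ := hBcover x hx
    exact ⟨p, Finset.mem_union_left C hp, hxp⟩
  · obtain ⟨p, hp, hxp⟩ := hCcover x hx
    exact ⟨p, Finset.mem_union_right B hp, hxp⟩

-- `0 ^ Fintype.card ι` is `1` in dimension `0`, where the error vanishes, and `0` otherwise.
theorem unitCube_one_sub_zero_pow :
    HasBracketingCover (1 - 0 ^ Fintype.card ι) 1 (Set.Icc (0 : ι → ℝ) 1) := by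
  refine ⟨{(0, 1)}, ?_, fun x hx => ⟨(0, 1), Finset.mem_singleton_self _, hx⟩,
    (Finset.card_singleton _).le⟩
  simp only [Finset.mem_singleton, forall_eq]
  exact ⟨le_rfl, zero_le_one, le_rfl, by simp⟩

theorem unitCube_one : HasBracketingCover 1 1 (Set.Icc (0 : ι → ℝ) 1) :=
  unitCube_one_sub_zero_pow.mono (sub_le_self 1 (by positivity))

theorem exists_isBracketingCover {s : ℕ}
    (h : HasBracketingCover δ k (Set.Icc (0 : Fin s → ℝ) 1)) :
    ∃ B : Finset ((Fin s → ℝ) × (Fin s → ℝ)), IsBracketingCover s δ B ∧ B.card ≤ k := by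
  obtain ⟨B, hB, hcover, hcard⟩ := h
  refine ⟨B, ⟨fun p hp => ?_, fun x hx => ?_⟩, hcard⟩
  · obtain ⟨h0, hle, h1, hδ⟩ := hB p hp
    exact ⟨fun i => ⟨h0 i, (hle i).trans (h1 i)⟩, fun i => ⟨(h0 i).trans (hle i), h1 i⟩, hle, hδ⟩
  · exact hcover x ⟨fun i => (hx i).1, fun i => (hx i).2⟩

end HasBracketingCover

end Brackets

section Slabs

variable {s : ℕ} {a b ε : ℝ}

/-- The slab `[a, b] × [0,1]^s` of the unit cube, cut out by its first coordinate. -/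
def slab (s : ℕ) (a b : ℝ) : Set (Fin (s + 1) → ℝ) :=
  {x ∈ Set.Icc 0 1 | x 0 ∈ Set.Icc a b}

theorem slab_union_slab {c : ℝ} (hab : a ≤ b) (hbc : b ≤ c) :
    slab s a b ∪ slab s b c = slab s a c := by
  simp only [slab, ← Set.Icc_union_Icc_eq_Icc hab hbc, Set.mem_union, and_or_left, Set.ofPred_or]

theorem slab_zero_one : slab s 0 1 = Set.Icc 0 1 :=
  Set.sep_eq_self_iff_mem_true.2 fun _ hx => ⟨hx.1 0, hx.2 0⟩

theorem IsBracket.cons {p : (Fin s → ℝ) × (Fin s → ℝ)} (hp : IsBracket ε p) (ha : 0 ≤ a)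
    (hab : a ≤ b) (hb : b ≤ 1) :
    IsBracket (ι := Fin (s + 1)) (a * ε + (b - a)) (Fin.cons a p.1, Fin.cons b p.2) where
  zero_le_fst := Fin.le_cons.2 ⟨ha, hp.zero_le_fst⟩
  fst_le_snd := (Fin.cons_le_cons (α := fun _ => ℝ)).2 ⟨hab, hp.fst_le_snd⟩
  snd_le_one := (Fin.cons_le (α := fun _ => ℝ)).2 ⟨hb, hp.snd_le_one⟩
  prod_sub_prod_le := by
    have hprod_snd : ∏ i, p.2 i ≤ 1 :=
      Finset.prod_le_one (fun i _ => (hp.zero_le_fst.trans hp.fst_le_snd) i)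
        fun i _ => hp.snd_le_one i
    simp only [Fin.prod_cons]
    calc b * ∏ i, p.2 i - a * ∏ i, p.1 i
        = a * (∏ i, p.2 i - ∏ i, p.1 i) + (b - a) * ∏ i, p.2 i := by ring
      _ ≤ a * ε + (b - a) :=
        add_le_add (mul_le_mul_of_nonneg_left hp.prod_sub_prod_le ha)
          (mul_le_of_le_one_right (sub_nonneg.2 hab) hprod_snd)

theorem HasBracketingCover.slab {k : ℕ} (h : HasBracketingCover ε k (Set.Icc (0 : Fin s → ℝ) 1))
    (ha : 0 ≤ a) (hab : a ≤ b) (hb : b ≤ 1) :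
    HasBracketingCover (a * ε + (b - a)) k (slab s a b) := by
  classical
  obtain ⟨B, hB, hcover, hcard⟩ := h
  refine ⟨B.image fun p => (Fin.cons a p.1, Fin.cons b p.2), ?_, ?_,
    Finset.card_image_le.trans hcard⟩
  · exact Finset.forall_mem_image.2 fun p hp => (hB p hp).cons ha hab hb
  · rintro x ⟨⟨hx0, hx1⟩, hax, hxb⟩
    obtain ⟨p, hp, hpx, hxp⟩ := hcover (Fin.tail x) ⟨fun i => hx0 i.succ, fun i => hx1 i.succ⟩
    exact ⟨_, Finset.mem_image_of_mem _ hp, (Fin.cons_le (α := fun _ => ℝ)).2 ⟨hax, hpx⟩,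
      Fin.le_cons.2 ⟨hxb, hxp⟩⟩

theorem hasBracketingCover_slab_zero {m n : ℕ}
    (hcube : ∀ m : ℕ, s + 1 ≤ m →
      HasBracketingCover ((s : ℝ) / m) (m.choose s) (Set.Icc (0 : Fin s → ℝ) 1))
    (hsm : s + 1 ≤ m) (hmn : m ≤ n) :
    HasBracketingCover (((s + 1 : ℕ) : ℝ) / n) (m.choose (s + 1)) (slab s 0 ((m : ℝ) / n)) := by
  have hdiv_le_one {j : ℕ} (hj : j ≤ n) : (j : ℝ) / n ≤ 1 :=
    div_le_one_of_le₀ (by exact_mod_cast hj) n.cast_nonneg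
  induction m, hsm using Nat.le_induction with
  | base =>
    simpa using HasBracketingCover.unitCube_one.slab le_rfl (by positivity) (hdiv_le_one hmn)
  | succ m hsm ih =>
    have hm : (m : ℝ) ≠ 0 := Nat.cast_ne_zero.2 (by lia)
    have hstep : (m : ℝ) / n ≤ ((m + 1 : ℕ) : ℝ) / n := by gcongr; exact m.le_succ
    have herror : (m : ℝ) / n * (s / m) + (((m + 1 : ℕ) : ℝ) / n - m / n)
        = ((s + 1 : ℕ) : ℝ) / n := by
      push_cast
      field_simp
      ring
    have hlast := (hcube m hsm).slab (by positivity) hstep (hdiv_le_one hmn)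
    rw [herror] at hlast
    rw [← slab_union_slab (by positivity) hstep, Nat.choose_succ_succ', add_comm (m.choose s)]
    exact (ih (by lia)).union hlast

end Slabs

theorem hasBracketingCover_unitCube_choose {s n : ℕ} (hsn : s ≤ n) :
    HasBracketingCover ((s : ℝ) / n) (n.choose s) (Set.Icc (0 : Fin s → ℝ) 1) := by
  induction s generalizing n with
  | zero => simpa using HasBracketingCover.unitCube_one_sub_zero_pow (ι := Fin 0)
  | succ s ih =>
    have hn : (n : ℝ) ≠ 0 := Nat.cast_ne_zero.2 (by lia)
    have hslab := hasBracketingCover_slab_zero (fun _ hm => ih (Nat.le_of_succ_le hm)) hsn le_rfl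
    rwa [div_self hn, slab_zero_one] at hslab

theorem pow_self_div_factorial_mul_pow_le {s : ℕ} (hs : 1 ≤ s) {t : ℝ} (ht : 0 ≤ t) :
    (s : ℝ) ^ s / (Nat.factorial s : ℝ) * t ^ s ≤
      (2 : ℝ) ^ ((s : ℤ) - 2) * ((s : ℝ) ^ s / (Nat.factorial s : ℝ)) * t ^ s + (1 / 2) * t := by
  obtain rfl | hs2 := hs.eq_or_lt
  · norm_num
    linarith
  · have htwo : (1 : ℝ) ≤ (2 : ℝ) ^ ((s : ℤ) - 2) := one_le_zpow₀ one_le_two (by lia)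
    rw [mul_assoc]
    exact (le_mul_of_one_le_left (by positivity) htwo).trans
      (le_add_of_nonneg_right (by positivity))

theorem bracketing_number_improved_bound_general (s : ℕ) {δ : ℝ} (hδ : 0 < δ) :
    ∃ B : Finset ((Fin s → ℝ) × (Fin s → ℝ)), IsBracketingCover s δ B ∧
      (B.card : ℝ) ≤ (s : ℝ) ^ s / (Nat.factorial s : ℝ) * (δ⁻¹ + 1) ^ s := by
  set c := ⌈δ⁻¹⌉₊
  have hc_pos : 0 < c := Nat.ceil_pos.2 (inv_pos.2 hδ)
  have hc_le : (c : ℝ) ≤ δ⁻¹ + 1 := (Nat.ceil_lt_add_one (inv_pos.2 hδ).le).le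
  have hwidth : (s : ℝ) / (s * c : ℕ) ≤ δ := by
    calc (s : ℝ) / (s * c : ℕ) = s / s * (c : ℝ)⁻¹ := by rw [Nat.cast_mul]; ring
      _ ≤ (c : ℝ)⁻¹ := mul_le_of_le_one_left (by positivity) (div_self_le_one _)
      _ ≤ δ := inv_le_of_inv_le₀ hδ (Nat.le_ceil _)
  obtain ⟨B, hB, hcard⟩ := ((hasBracketingCover_unitCube_choose
    (Nat.le_mul_of_pos_right s hc_pos)).mono hwidth).exists_isBracketingCover
  refine ⟨B, hB, ?_⟩
  calc (B.card : ℝ) ≤ ((s * c).choose s : ℝ) := by exact_mod_cast hcard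
    _ ≤ ((s * c : ℕ) : ℝ) ^ s / (Nat.factorial s : ℝ) := Nat.choose_le_pow_div s (s * c)
    _ = (s : ℝ) ^ s / (Nat.factorial s : ℝ) * (c : ℝ) ^ s := by rw [Nat.cast_mul, mul_pow]; ring
    _ ≤ (s : ℝ) ^ s / (Nat.factorial s : ℝ) * (δ⁻¹ + 1) ^ s := by gcongr

/-- **Improved Gnewuch bound.** For `s ≥ 1` and `0 < δ ≤ 1` there is a `δ`-bracketing cover of
`[0,1]^s` of cardinality at most `2^(s-2) (s^s / s!) (δ⁻¹ + 1)^s + (1/2)(δ⁻¹ + 1)`. -/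
theorem bracketing_number_improved_bound (s : ℕ) (hs : 1 ≤ s) (δ : ℝ) (hδ0 : 0 < δ)
    (hδ1 : δ ≤ 1) :
    ∃ B : Finset ((Fin s → ℝ) × (Fin s → ℝ)), IsBracketingCover s δ B ∧
      (B.card : ℝ) ≤ (2 : ℝ) ^ ((s : ℤ) - 2) * ((s : ℝ) ^ s / (Nat.factorial s : ℝ)) *
          (δ⁻¹ + 1) ^ s + (1 / 2) * (δ⁻¹ + 1) := by
  obtain ⟨B, hB, hcard⟩ := bracketing_number_improved_bound_general s hδ0
  exact ⟨B, hB, hcard.trans (pow_self_div_factorial_mul_pow_le hs (by positivity))⟩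
end

section
/- Let K ≥ 33 and let 32 ≤ k ≤ K−1 be integers. Set a_k = (4/3)(1+k)·log 2 + 1 + log(2^{−k−1} + 1) and let c_{k,K} be the unique positive real satisfying c_{k,K}² = a_k·(2^{−k+1}(1 − 2^{−k}) + (4/3)·c_{k,K}·2^{−K}). Then c_{k,K} ≤ 0.2480726 · k · 2^{−k/2}. -/
/-!
If `0 ≤ p` and `x ^ 2 - q * x - p` is nonnegative at some `M > 0`, then it is positive beyond `M`.
Hence it suffices to evaluate the quadratic at the claimed bound
`M = 0.2480726 * k * 2 ^ (-k / 2)`. There, once `ckCoeff k` is bounded by a multiple of `k`, and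
`2 ^ (-k / 2)` by `2 ^ (-16)` in the small term linear in `c`, dividing by `k * 2 ^ (-k)` leaves
an inequality linear in `k`, whose worst case is `k = 32`.
-/

/-- The coefficient `a_k` of the quadratic equation for `c_{k,K}`, for a real index `k`. -/
noncomputable def ckCoeff (k : ℝ) : ℝ :=
  (4 / 3) * (1 + k) * Real.log 2 + 1 + Real.log ((2 : ℝ) ^ (-k - 1) + 1)

theorem le_of_sq_le_add_mul {R : Type*} [CommRing R] [LinearOrder R] [IsStrictOrderedRing R]
    {p q x M : R} (hp : 0 ≤ p) (hM : 0 < M) (hx : x ^ 2 ≤ p + q * x)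
    (hpM : p + q * M ≤ M ^ 2) : x ≤ M := by
  by_contra! hlt
  have q_le : q ≤ M := le_of_mul_le_mul_right (by linarith [sq M]) hM
  have diff_nonpos : (x - M) * (x + M - q) ≤ 0 := by linarith
  have diff_pos : 0 < (x - M) * (x + M - q) := mul_pos (by linarith) (by linarith)
  exact diff_nonpos.not_gt diff_pos

theorem two_rpow_neg_eq_sq (t : ℝ) : (2 : ℝ) ^ (-t) = ((2 : ℝ) ^ (-t / 2)) ^ 2 := by
  rw [← Real.rpow_mul_natCast zero_le_two]
  congr 1
  push_cast
  ring

theorem two_rpow_neg_half_le {t : ℝ} (ht : 32 ≤ t) : (2 : ℝ) ^ (-t / 2) ≤ 1 / 65536 :=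
  calc (2 : ℝ) ^ (-t / 2) ≤ (2 : ℝ) ^ (-16 : ℝ) :=
        Real.rpow_le_rpow_of_exponent_le one_le_two (by linarith)
    _ = 1 / 65536 := by
        rw [Real.rpow_neg zero_le_two]
        norm_num

theorem ckCoeff_nonneg {k : ℝ} (hk : -1 ≤ k) : 0 ≤ ckCoeff k := by
  have : 0 ≤ 1 + k := by linarith
  have : 0 ≤ Real.log ((2 : ℝ) ^ (-k - 1) + 1) :=
    Real.log_nonneg (le_add_of_nonneg_left (by positivity))
  unfold ckCoeff
  positivity

-- The constant rounds up the value of `ckCoeff k / k` at `k = 32`, where it is largest.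
theorem ckCoeff_le_mul {k : ℝ} (hk : 32 ≤ k) : ckCoeff k ≤ 0.9843274 * k := by
  have log_two_term : (1 + k) * Real.log 2 ≤ (1 + k) * 0.6931471808 :=
    mul_le_mul_of_nonneg_left Real.log_two_lt_d9.le (by linarith)
  have log_term : Real.log ((2 : ℝ) ^ (-k - 1) + 1) ≤ 1 / 2 ^ 33 :=
    calc Real.log ((2 : ℝ) ^ (-k - 1) + 1) ≤ (2 : ℝ) ^ (-k - 1) := by
          linarith [Real.log_le_sub_one_of_pos (show 0 < (2 : ℝ) ^ (-k - 1) + 1 by positivity)]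
      _ ≤ (2 : ℝ) ^ (-33 : ℝ) := Real.rpow_le_rpow_of_exponent_le one_le_two (by linarith)
      _ = 1 / 2 ^ 33 := by
          rw [Real.rpow_neg zero_le_two]
          norm_num
  unfold ckCoeff
  linarith

theorem two_rpow_neg_factor_le {k K b : ℝ} (hk : 32 ≤ k) (hkK : k ≤ K + 1) (hb : 0 ≤ b) :
    (2 : ℝ) ^ (-k + 1) * (1 - (2 : ℝ) ^ (-k))
        + (4 / 3) * (b * (2 : ℝ) ^ (-k / 2)) * (2 : ℝ) ^ (-K) ≤
      (2 : ℝ) ^ (-k) * (2 + 8 / 3 * (b / 65536)) := by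
  have rpow_neg_K_le : (2 : ℝ) ^ (-K) ≤ (2 : ℝ) ^ (-k + 1) :=
    Real.rpow_le_rpow_of_exponent_le one_le_two (by linarith)
  calc (2 : ℝ) ^ (-k + 1) * (1 - (2 : ℝ) ^ (-k))
        + (4 / 3) * (b * (2 : ℝ) ^ (-k / 2)) * (2 : ℝ) ^ (-K)
      ≤ (2 : ℝ) ^ (-k + 1) * 1 + (4 / 3) * (b * (1 / 65536)) * (2 : ℝ) ^ (-k + 1) := by
        gcongr
        · exact sub_le_self 1 (by positivity)
        · exact two_rpow_neg_half_le hk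
    _ = (2 : ℝ) ^ (-k) * (2 + 8 / 3 * (b / 65536)) := by
        rw [Real.rpow_add_one two_ne_zero]
        ring

theorem ckCoeff_mul_le_sq {k K : ℝ} (hk : 32 ≤ k) (hkK : k ≤ K + 1) :
    ckCoeff k * ((2 : ℝ) ^ (-k + 1) * (1 - (2 : ℝ) ^ (-k))
        + (4 / 3) * (0.2480726 * k * (2 : ℝ) ^ (-k / 2)) * (2 : ℝ) ^ (-K)) ≤
      (0.2480726 * k * (2 : ℝ) ^ (-k / 2)) ^ 2 := by
  have linear_ineq :
      0.9843274 * (2 + 8 / 3 * (0.2480726 * k / 65536)) ≤ 0.2480726 ^ 2 * k := by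
    linarith
  calc ckCoeff k * ((2 : ℝ) ^ (-k + 1) * (1 - (2 : ℝ) ^ (-k))
        + (4 / 3) * (0.2480726 * k * (2 : ℝ) ^ (-k / 2)) * (2 : ℝ) ^ (-K))
      ≤ ckCoeff k * ((2 : ℝ) ^ (-k) * (2 + 8 / 3 * (0.2480726 * k / 65536))) :=
        mul_le_mul_of_nonneg_left (two_rpow_neg_factor_le hk hkK (by positivity))
          (ckCoeff_nonneg (by linarith))
    _ ≤ 0.9843274 * k * ((2 : ℝ) ^ (-k) * (2 + 8 / 3 * (0.2480726 * k / 65536))) :=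
        mul_le_mul_of_nonneg_right (ckCoeff_le_mul hk) (by positivity)
    _ = k * (2 : ℝ) ^ (-k) * (0.9843274 * (2 + 8 / 3 * (0.2480726 * k / 65536))) := by ring
    _ ≤ k * (2 : ℝ) ^ (-k) * (0.2480726 ^ 2 * k) := by gcongr
    _ = (0.2480726 * k * (2 : ℝ) ^ (-k / 2)) ^ 2 := by
        rw [two_rpow_neg_eq_sq k]
        ring

theorem ck_decay_bound_general {k K c : ℝ} (hk : 32 ≤ k) (hkK : k ≤ K + 1)
    (hc : c ^ 2 ≤ ckCoeff k * ((2 : ℝ) ^ (-k + 1) * (1 - (2 : ℝ) ^ (-k))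
      + (4 / 3) * c * (2 : ℝ) ^ (-K))) :
    c ≤ 0.2480726 * k * (2 : ℝ) ^ (-k / 2) := by
  have coeff_nonneg : 0 ≤ ckCoeff k := ckCoeff_nonneg (by linarith)
  have one_sub_nonneg : 0 ≤ 1 - (2 : ℝ) ^ (-k) :=
    sub_nonneg.2 (Real.rpow_le_one_of_one_le_of_nonpos one_le_two (by linarith))
  refine le_of_sq_le_add_mul (p := ckCoeff k * ((2 : ℝ) ^ (-k + 1) * (1 - (2 : ℝ) ^ (-k))))
    (q := ckCoeff k * (4 / 3) * (2 : ℝ) ^ (-K)) (by positivity) (by positivity) ?_ ?_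
  · linarith
  · linarith [ckCoeff_mul_le_sq hk hkK]

/-- For integers `K ≥ 33` and `32 ≤ k ≤ K − 1`, the unique positive solution `c` of
`c² = a_k (2^(−k+1)(1 − 2^(−k)) + (4/3) c 2^(−K))`, where
`a_k = (4/3)(1+k) log 2 + 1 + log(2^(−k−1) + 1)`, satisfies `c ≤ 0.2480726 · k · 2^(−k/2)`. -/
theorem ck_decay_bound (K k : ℕ) (hK : 33 ≤ K) (hk : 32 ≤ k) (hkK : k ≤ K - 1)
    (c : ℝ) (hcpos : 0 < c)
    (hc : c ^ 2 = ((4 / 3) * (1 + (k : ℝ)) * Real.log 2 + 1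
          + Real.log ((2 : ℝ) ^ (-(k : ℤ) - 1) + 1)) *
        ((2 : ℝ) ^ (-(k : ℤ) + 1) * (1 - (2 : ℝ) ^ (-(k : ℤ)))
          + (4 / 3) * c * (2 : ℝ) ^ (-(K : ℤ)))) :
    c ≤ 0.2480726 * (k : ℝ) * (2 : ℝ) ^ (-(k : ℝ) / 2) := by
  refine ck_decay_bound_general (K := K) (mod_cast hk) (mod_cast (by omega : k ≤ K + 1)) ?_
  simpa [ckCoeff, ← Real.rpow_intCast] using hc.le
end

section
/- Let K ≥ 3 and 2 ≤ k ≤ K−1 be integers. Set a_k = (4/3)(1+k)·log 2 + 1 + log(2^{−k−1} + 1) and let c_k be the unique positive real satisfying c_k² = a_k·(2^{−k+1}(1 − 2^{−k}) + (4/3)·c_k·2^{−K}). Then c_k ≤ 1.58. Moreover, setting a_K = (4/3)·K·log 2 + 1 + log(1 + 2^{−K}) and letting c_K be the unique positive real satisfying c_K² = a_K·(2^{−K+1}(1 − 2^{−K}) + (4/3)·c_K·2^{−K}), one has c_K ≤ 1.33. -/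
/-!
Put `a m = (4/3) m log 2 + 1 + log (1 + 2⁻ᵐ)`. Then `a_k = a (k + 1)` and `a_K = a K`, so with
`t = 2⁻ᵐ` for `m = k + 1`, respectively `m = K`, both equations have the shape
`c² = a m (β t (1 - s t) + (4/3) c y)` with `y ≤ t`, where `(β, s)` is `(4, 2)`, respectively
`(2, 1)`. The positive root is at most `c₀ > 0` as soon as the right-hand side at `c₀` is at most
`c₀²`. Since `a (m + 1) ≤ (4/3) a m`, that right-hand side (with `y = t`) decreases in `m ≥ 2`, so
it is enough to test `m = 3`.
-/

open Real

/-- The common form of the coefficients of both quadratic equations: the paper's `a_k` for `k < K`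
is `logCoeff (k + 1)`, whereas its `a_K` is `logCoeff K`. -/
noncomputable def logCoeff (m : ℕ) : ℝ :=
  4 / 3 * m * log 2 + 1 + log (1 + (1 / 2) ^ m)

theorem le_of_sq_le_add_mul_s13 {b d c c₀ : ℝ} (hb : 0 ≤ b) (hc₀ : 0 < c₀)
    (hc : c ^ 2 ≤ b + d * c) (h : b + d * c₀ ≤ c₀ ^ 2) : c ≤ c₀ := by
  by_contra! hlt
  have hmul : c₀ * c * c ≤ c₀ * c * c₀ :=
    calc c₀ * c * c = c₀ * c ^ 2 := by ring
      _ ≤ c₀ * (b + d * c) := by gcongr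
      _ = c₀ * b + d * c * c₀ := by ring
      _ ≤ c * b + d * c * c₀ := by gcongr
      _ = c * (b + d * c₀) := by ring
      _ ≤ c * c₀ ^ 2 := by gcongr; exact (hc₀.trans hlt).le
      _ = c₀ * c * c₀ := by ring
  exact hlt.not_ge (le_of_mul_le_mul_left hmul (mul_pos hc₀ (hc₀.trans hlt)))

theorem log_one_add_half_pow_nonneg (m : ℕ) : 0 ≤ log (1 + (1 / 2) ^ m) :=
  log_nonneg (le_add_of_nonneg_right (by positivity))

theorem logCoeff_pos (m : ℕ) : 0 < logCoeff m := by
  have := log_one_add_half_pow_nonneg m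
  unfold logCoeff
  positivity

theorem logCoeff_three_le : logCoeff 3 ≤ 3.8978 := by
  have hlog : log (1 + (1 / 2) ^ 3) ≤ 1 / 8 :=
    (log_le_sub_one_of_pos (by norm_num)).trans_eq (by norm_num)
  unfold logCoeff
  push_cast
  linarith [log_two_lt_d9]

theorem logCoeff_succ_le {m : ℕ} (hm : 2 ≤ m) : logCoeff (m + 1) ≤ 4 / 3 * logCoeff m := by
  have hincr : logCoeff (m + 1) ≤ logCoeff m + 4 / 3 * log 2 := by
    have hlog : log (1 + (1 / 2) ^ (m + 1)) ≤ log (1 + (1 / 2) ^ m) := by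
      refine log_le_log (by positivity) ?_
      gcongr 1 + ?_
      exact pow_le_pow_of_le_one (by norm_num) (by norm_num) m.le_succ
    unfold logCoeff
    push_cast
    linarith
  have hlower : 4 * log 2 ≤ logCoeff m := by
    have hlinear : 2 * log 2 ≤ m * log 2 := by
      gcongr
      exact_mod_cast hm
    unfold logCoeff
    linarith [log_two_lt_d9, log_one_add_half_pow_nonneg m]
  linarith

theorem antitoneOn_logCoeff_mul {p q : ℝ} (hp : 0 ≤ p) (hq : q ≤ 2 * p) :
    AntitoneOn (fun m ↦ logCoeff m * ((1 / 2) ^ m * (p - q * (1 / 2) ^ m))) (Set.Ici 2) := by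
  refine antitoneOn_nat_Ici_of_succ_le fun m hm ↦ ?_
  have ha := (logCoeff_pos m).le
  have hsucc := logCoeff_succ_le hm
  have ht : (1 / 2 : ℝ) ^ m ≤ (1 / 2) ^ 2 :=
    pow_le_pow_of_le_one (by norm_num) (by norm_num) hm
  have ht₀ : (0 : ℝ) ≤ (1 / 2) ^ m := by positivity
  rw [pow_succ]
  generalize (1 / 2 : ℝ) ^ m = t at ht ht₀ ⊢
  have hqt : 2 * (q * t) ≤ p :=
    calc 2 * (q * t) ≤ 2 * (2 * p * (1 / 2) ^ 2) := by gcongr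
      _ = p := by ring
  calc logCoeff (m + 1) * (t * (1 / 2) * (p - q * (t * (1 / 2))))
      ≤ 4 / 3 * logCoeff m * (t * (1 / 2) * (p - q * (t * (1 / 2)))) := by
        gcongr
        exact mul_nonneg (by positivity) (by linarith)
    _ = logCoeff m * (t * (2 / 3 * (p - q * t / 2))) := by ring
    _ ≤ logCoeff m * (t * (p - q * t)) := by
        gcongr
        linarith

theorem le_of_sq_eq_logCoeff_mul {m : ℕ} {β s y c c₀ : ℝ} (hm : 3 ≤ m) (hβ : 0 ≤ β)
    (hs : s ≤ 2) (hy : y ≤ (1 / 2) ^ m) (hc₀ : 0 < c₀)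
    (hc : c ^ 2 = logCoeff m * (β * (1 / 2) ^ m * (1 - s * (1 / 2) ^ m) + 4 / 3 * c * y))
    (h₃ : logCoeff 3 / 8 * (β * (1 - s / 8) + 4 / 3 * c₀) ≤ c₀ ^ 2) : c ≤ c₀ := by
  have ha := (logCoeff_pos m).le
  have hst : s * (1 / 2) ^ m ≤ 1 :=
    calc s * (1 / 2) ^ m ≤ 2 * (1 / 2) ^ 3 := by
          gcongr ?_ * ?_
          exact pow_le_pow_of_le_one (by norm_num) (by norm_num) hm
      _ ≤ 1 := by norm_num
  have hβs : β * s ≤ 2 * (β + 4 / 3 * c₀) :=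
    calc β * s ≤ β * 2 := by gcongr
      _ ≤ 2 * (β + 4 / 3 * c₀) := by linarith
  have hanti := antitoneOn_logCoeff_mul (p := β + 4 / 3 * c₀) (q := β * s) (by positivity)
    hβs (Set.mem_Ici.2 (Nat.le_succ 2)) (Set.mem_Ici.2 (by lia)) hm
  refine le_of_sq_le_add_mul_s13 (b := logCoeff m * (β * (1 / 2) ^ m * (1 - s * (1 / 2) ^ m)))
    (d := logCoeff m * (4 / 3 * y)) ?_ hc₀ (hc.trans_le (by linarith)) ?_
  · have := sub_nonneg.2 hst
    positivity
  calc logCoeff m * (β * (1 / 2) ^ m * (1 - s * (1 / 2) ^ m)) + logCoeff m * (4 / 3 * y) * c₀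
      ≤ logCoeff m * (β * (1 / 2) ^ m * (1 - s * (1 / 2) ^ m))
          + logCoeff m * (4 / 3 * (1 / 2) ^ m) * c₀ := by gcongr
    _ = logCoeff m * ((1 / 2) ^ m * (β + 4 / 3 * c₀ - β * s * (1 / 2) ^ m)) := by ring
    _ ≤ logCoeff 3 * ((1 / 2) ^ 3 * (β + 4 / 3 * c₀ - β * s * (1 / 2) ^ 3)) := hanti
    _ = logCoeff 3 / 8 * (β * (1 - s / 8) + 4 / 3 * c₀) := by ring
    _ ≤ c₀ ^ 2 := h₃

theorem two_zpow_neg_natCast (n : ℕ) : (2 : ℝ) ^ (-(n : ℤ)) = (1 / 2) ^ n := by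
  rw [zpow_neg, zpow_natCast, one_div, inv_pow]

theorem two_zpow_neg_natCast_sub_one (n : ℕ) :
    (2 : ℝ) ^ (-(n : ℤ) - 1) = (1 / 2) ^ (n + 1) := by
  rw [← two_zpow_neg_natCast]
  push_cast
  ring_nf

theorem two_zpow_neg_natCast_add_one (n : ℕ) :
    (2 : ℝ) ^ (-(n : ℤ) + 1) = 2 * (1 / 2) ^ n := by
  rw [zpow_add_one₀ two_ne_zero, two_zpow_neg_natCast, mul_comm]

/-- For integers `K ≥ 3` and `2 ≤ k ≤ K − 1`, the unique positive solution `ck` of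
`ck² = a_k (2^(−k+1)(1 − 2^(−k)) + (4/3) ck 2^(−K))` with
`a_k = (4/3)(1+k) log 2 + 1 + log(2^(−k−1) + 1)` satisfies `ck ≤ 1.58`; moreover the unique
positive solution `cK` of `cK² = a_K (2^(−K+1)(1 − 2^(−K)) + (4/3) cK 2^(−K))` with
`a_K = (4/3) K log 2 + 1 + log(1 + 2^(−K))` satisfies `cK ≤ 1.33`. -/
theorem ck_le_and_cK_le (K k : ℕ) (hK : 3 ≤ K) (hk : 2 ≤ k) (hkK : k ≤ K - 1)
    (ck cK : ℝ) (hckpos : 0 < ck) (hcKpos : 0 < cK)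
    (hck : ck ^ 2 = ((4 / 3) * (1 + (k : ℝ)) * Real.log 2 + 1
          + Real.log ((2 : ℝ) ^ (-(k : ℤ) - 1) + 1)) *
        ((2 : ℝ) ^ (-(k : ℤ) + 1) * (1 - (2 : ℝ) ^ (-(k : ℤ)))
          + (4 / 3) * ck * (2 : ℝ) ^ (-(K : ℤ))))
    (hcK : cK ^ 2 = ((4 / 3) * (K : ℝ) * Real.log 2 + 1
          + Real.log (1 + (2 : ℝ) ^ (-(K : ℤ)))) *
        ((2 : ℝ) ^ (-(K : ℤ) + 1) * (1 - (2 : ℝ) ^ (-(K : ℤ)))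
          + (4 / 3) * cK * (2 : ℝ) ^ (-(K : ℤ)))) :
    ck ≤ 1.58 ∧ cK ≤ 1.33 := by
  simp only [two_zpow_neg_natCast_sub_one, two_zpow_neg_natCast_add_one,
    two_zpow_neg_natCast] at hck hcK
  constructor
  · have hpow : (1 / 2 : ℝ) ^ K ≤ (1 / 2) ^ (k + 1) :=
      pow_le_pow_of_le_one (by norm_num) (by norm_num) (by lia)
    refine le_of_sq_eq_logCoeff_mul (m := k + 1) (β := 4) (s := 2) (by lia) (by norm_num)
      le_rfl hpow (by norm_num) ?_ (by linarith [logCoeff_three_le])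
    rw [hck, logCoeff]
    push_cast
    ring_nf
  · exact le_of_sq_eq_logCoeff_mul (β := 2) (s := 1) hK (by norm_num) (by norm_num) le_rfl
      (by norm_num) (by rw [hcK, logCoeff, one_mul]) (by linarith [logCoeff_three_le])
end
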